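/- Let n ≥ 2 and let q : (V^n, Σ) → (M^n, {p}) be a topological blowup of M at p such that V \ Σ is dense in V. If every homeomorphism of (M, {p}) is covered by a homeomorphism of (V, Σ) through q, then Σ is a single point and q is a homeomorphism. -/

import Mathlib

/-- A topological blowup of an `n`-manifold `M` at a point `p`: a quotient map
`q : V → M` from an `n`-manifold `V` such that `Σ = q⁻¹({p})` is nonempty, compact and
connected, and `q` restricts to a homeomorphism `V \ Σ → M \ {p}`. -/
structure TopBlowup (n : ℕ) (V M : Type*) [TopologicalSpace V] [TopologicalSpace M]
    [T2Space V] [T2Space M]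
    [ChartedSpace (EuclideanSpace ℝ (Fin n)) V]
    [ChartedSpace (EuclideanSpace ℝ (Fin n)) M] (p : M) where
  q : V → M
  quotientMap : Topology.IsQuotientMap q
  compact_fiber : IsCompact (q ⁻¹' {p})
  connected_fiber : IsConnected (q ⁻¹' {p})
  homeo_off : IsHomeomorph
    (Set.MapsTo.restrict q ((q ⁻¹' {p})ᶜ) ({p}ᶜ) (fun _ hv => hv))


open Topology Set Filter

theorem aux_local {E : Type*} [NormedAddCommGroup E] [NormedSpace ℝ E] [CompleteSpace E]
    (U : Set E) (hU : IsOpen U) (x : E) (hx : x ∈ U) :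
    ∃ δ > 0, ∀ y ∈ Metric.ball x δ, ∃ g : E ≃ₜ E, g x = y ∧ ∀ z, z ∉ U → g z = z := by
  obtain ⟨ε, hε, hball⟩ := Metric.isOpen_iff.1 hU x hx
  refine ⟨ε, hε, fun y hy => ?_⟩
  have hy' : ‖y - x‖ < ε := by simpa [dist_eq_norm] using hy
  set φ : E → ℝ := fun z => max 0 (1 - ‖z - x‖ / ε) with hφ
  have hφl : ∀ a b, |φ a - φ b| ≤ ‖a - b‖ / ε := by
    intro a b
    have h1 : |φ a - φ b| ≤ |(1 - ‖a - x‖ / ε) - (1 - ‖b - x‖ / ε)| := by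
      have := abs_max_sub_max_le_abs (1 - ‖a - x‖ / ε) (1 - ‖b - x‖ / ε) 0
      simpa [hφ, max_comm] using this
    refine h1.trans ?_
    have h2 : (1 - ‖a - x‖ / ε) - (1 - ‖b - x‖ / ε) = (‖b - x‖ - ‖a - x‖) / ε := by ring
    rw [h2, abs_div, abs_of_pos hε]
    gcongr
    have := abs_norm_sub_norm_le (b - x) (a - x)
    rwa [sub_sub_sub_cancel_right, norm_sub_rev b a] at this
  set c : NNReal := ⟨‖y - x‖ / ε, by positivity⟩ with hc
  have hc1 : c < 1 := by
    rw [← NNReal.coe_lt_coe]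
    change ‖y - x‖ / ε < 1
    rwa [div_lt_one hε]
  have happ : ApproximatesLinearOn (fun z => z + φ z • (y - x))
      ((ContinuousLinearEquiv.refl ℝ E : E ≃L[ℝ] E) : E →L[ℝ] E) univ c := by
    intro a _ b _
    have : (a + φ a • (y - x)) - (b + φ b • (y - x)) -
      ((ContinuousLinearEquiv.refl ℝ E : E ≃L[ℝ] E) : E →L[ℝ] E) (a - b)
        = (φ a - φ b) • (y - x) := by
      simp [sub_smul]; abel
    rw [this, norm_smul, Real.norm_eq_abs]
    change _ ≤ ‖y - x‖ / ε * ‖a - b‖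
    calc |φ a - φ b| * ‖y - x‖ ≤ ‖a - b‖ / ε * ‖y - x‖ := by gcongr; exact hφl a b
      _ = _ := by ring
  have hcc : Subsingleton E ∨
      c < ‖((ContinuousLinearEquiv.refl ℝ E).symm : E →L[ℝ] E)‖₊⁻¹ := by
    rcases subsingleton_or_nontrivial E with h | h
    · exact Or.inl h
    · right
      have : ‖((ContinuousLinearEquiv.refl ℝ E).symm : E →L[ℝ] E)‖₊ = 1 := by
        rw [← NNReal.coe_inj]
        exact ContinuousLinearMap.norm_id
      rw [this]; simpa using hc1
  refine ⟨happ.toHomeomorph _ hcc, ?_, ?_⟩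
  · change x + φ x • (y - x) = y
    simp [hφ]
  · intro z hz
    change z + φ z • (y - x) = z
    have : ε ≤ ‖z - x‖ := by
      by_contra h
      exact hz (hball (by simpa [dist_eq_norm] using h))
    have h0 : φ z = 0 := by
      simp only [hφ]
      apply max_eq_left
      have : 1 ≤ ‖z - x‖ / ε := by rwa [one_le_div hε]
      linarith
    simp [h0]

theorem aux_trans {E : Type*} [NormedAddCommGroup E] [NormedSpace ℝ E] [CompleteSpace E]
    (U : Set E) (hU : IsOpen U) (hc : IsPreconnected U) (x y : E) (hx : x ∈ U) (hy : y ∈ U) :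
    ∃ g : E ≃ₜ E, g x = y ∧ ∀ z, z ∉ U → g z = z := by
  have key : U ⊆ {y | y ∈ U ∧ ∃ g : E ≃ₜ E, g x = y ∧ ∀ z, z ∉ U → g z = z} := by
    apply hc.subset_of_closure_inter_subset
    · rw [Metric.isOpen_iff]
      rintro a ⟨ha, g, hg, hgU⟩
      obtain ⟨δ, hδ, H⟩ := aux_local U hU a ha
      obtain ⟨ε, hε, hball⟩ := Metric.isOpen_iff.1 hU a ha
      refine ⟨min δ ε, lt_min hδ hε, fun b hb => ⟨hball ?_, ?_⟩⟩
      · exact Metric.ball_subset_ball (min_le_right _ _) hb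
      · obtain ⟨g', h1, h2⟩ := H b (Metric.ball_subset_ball (min_le_left _ _) hb)
        refine ⟨g.trans g', by simp [hg, h1], fun z hz => by simp [hgU z hz, h2 z hz]⟩
    · exact ⟨x, hx, hx, Homeomorph.refl E, rfl, fun _ _ => rfl⟩
    · rintro a ⟨ha, haU⟩
      refine ⟨haU, ?_⟩
      obtain ⟨δ, hδ, H⟩ := aux_local U hU a haU
      obtain ⟨b, ⟨hb, g, hg, hgU⟩, hd⟩ := Metric.mem_closure_iff.1 ha δ hδ
      obtain ⟨g', h1, h2⟩ := H b (by rwa [Metric.mem_ball, dist_comm])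
      refine ⟨g.trans g'.symm, ?_, fun z hz => ?_⟩
      · simp [hg, ← h1]
      · simp only [Homeomorph.trans_apply, hgU z hz]
        rw [Homeomorph.symm_apply_eq, h2 z hz]
  exact (key hy).2

/-- open annulus -/
def annu (E : Type*) [NormedAddCommGroup E] (r R : ℝ) : Set E := {x | r < ‖x‖ ∧ ‖x‖ < R}

theorem annu_open (E : Type*) [NormedAddCommGroup E] (r R : ℝ) : IsOpen (annu E r R) :=
  (isOpen_lt continuous_const continuous_norm).inter (isOpen_lt continuous_norm continuous_const)

theorem annu_conn (n : ℕ) (hn : 2 ≤ n) (r R : ℝ) (hr : 0 < r) :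
    IsPreconnected (annu (EuclideanSpace ℝ (Fin n)) r R) := by
  have hrank : 1 < Module.rank ℝ (EuclideanSpace ℝ (Fin n)) := by
    rw [← Module.finrank_eq_rank, finrank_euclideanSpace_fin]
    exact_mod_cast hn
  have hs : IsPreconnected (Metric.sphere (0 : EuclideanSpace ℝ (Fin n)) 1) :=
    isPreconnected_sphere hrank 0 1
  have h := ((isPreconnected_Ioo (a := r) (b := R)).prod hs).image
    (fun t : ℝ × EuclideanSpace ℝ (Fin n) => t.1 • t.2) (by fun_prop)
  convert h using 1
  ext x
  constructor
  · rintro ⟨h1, h2⟩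
    have h0 : ‖x‖ ≠ 0 := (hr.trans h1).ne'
    refine ⟨(‖x‖, ‖x‖⁻¹ • x), ⟨⟨h1, h2⟩, ?_⟩, ?_⟩
    · simp [norm_smul, h0]
    · simp [smul_smul, h0]
  · rintro ⟨⟨t, u⟩, ⟨⟨h1, h2⟩, h3⟩, rfl⟩
    have h1 : r < t := h1
    have h3 : ‖u‖ = 1 := by simpa using h3
    have : ‖t • u‖ = t := by rw [norm_smul, h3, Real.norm_of_nonneg (hr.trans h1).le, mul_one]
    exact ⟨by simpa only [this] using h1, by simpa only [this] using h2⟩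

/-- glue the maps -/
noncomputable def glueFun {E : Type*} (U : ℕ → Set E) (g : ℕ → E → E) (x : E) : E :=
  open Classical in if h : ∃ k, x ∈ U k then g h.choose x else x

theorem glue_mem {E : Type*} {U : ℕ → Set E} {g : ℕ → E → E}
    (hd : ∀ i j x, x ∈ U i → x ∈ U j → i = j) {k : ℕ} {x : E} (hx : x ∈ U k) :
    glueFun U g x = g k x := by
  have h : ∃ k, x ∈ U k := ⟨k, hx⟩
  rw [glueFun, dif_pos h, hd _ _ x h.choose_spec hx]

theorem glue_not {E : Type*} {U : ℕ → Set E} {g : ℕ → E → E}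
    {x : E} (hx : ∀ k, x ∉ U k) : glueFun U g x = x := by
  have h : ¬ ∃ k, x ∈ U k := by simpa using hx
  rw [glueFun, dif_neg h]

theorem homeo_maps {E : Type*} [TopologicalSpace E] {U : Set E} {g : E ≃ₜ E}
    (h : ∀ z, z ∉ U → g z = z) {x : E} (hx : x ∈ U) : g x ∈ U := by
  by_contra hc
  have := h _ hc
  exact hc (by rw [g.injective this]; exact hx)

theorem glue_cont {E : Type*} [TopologicalSpace E] [T2Space E] (p : E) (U : ℕ → Set E)
    (hU : ∀ k, IsOpen (U k)) (hd : ∀ i j x, x ∈ U i → x ∈ U j → i = j)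
    (hp : ∀ W ∈ 𝓝 p, ∃ K, ∀ k ≥ K, U k ⊆ W)
    (g : ℕ → E ≃ₜ E) (hg : ∀ k z, z ∉ U k → g k z = z) :
    Continuous (glueFun U (fun k => g k)) := by
  rw [continuous_iff_continuousAt]
  intro x
  by_cases hx : ∃ k, x ∈ U k
  · obtain ⟨k, hk⟩ := hx
    refine ((g k).continuous.continuousAt (x := x)).congr ?_
    filter_upwards [(hU k).mem_nhds hk] with y hy
    exact (glue_mem (g := fun k => ⇑(g k)) hd hy).symm
  · push Not at hx
    rw [ContinuousAt, glue_not hx]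
    intro W hW
    have key : ∃ K : ℕ, ∀ᶠ y in 𝓝 x, ∀ k ≥ K, y ∈ U k → g k y ∈ W := by
      by_cases hxp : x = p
      · subst hxp
        obtain ⟨K, hK⟩ := hp W hW
        exact ⟨K, Eventually.of_forall fun y k hk hy => hK k hk (homeo_maps (hg k) hy)⟩
      · obtain ⟨A, B, hA, hB, hxA, hpB, hAB⟩ := t2_separation hxp
        obtain ⟨K, hK⟩ := hp B (hB.mem_nhds hpB)
        refine ⟨K, ?_⟩
        filter_upwards [hA.mem_nhds hxA] with y hy k hk hyk
        exact absurd (hK k hk hyk) (disjoint_left.1 hAB hy)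
    obtain ⟨K, hK⟩ := key
    have h2 : ∀ᶠ y in 𝓝 x, ∀ k ∈ Finset.range K, g k y ∈ W := by
      rw [Filter.eventually_all_finset]
      intro k _
      apply (g k).continuous.continuousAt
      rw [hg k x (hx k)]; exact hW
    rw [Filter.mem_map]
    filter_upwards [hK, h2, hW] with y h1 h2 h3
    rw [mem_preimage]
    by_cases hy : ∃ k, y ∈ U k
    · obtain ⟨k, hk⟩ := hy
      rw [glue_mem hd hk]
      by_cases hkK : K ≤ k
      · exact h1 k hkK hk
      · exact h2 k (by simpa using hkK)
    · push Not at hy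
      rw [glue_not hy]; exact h3

theorem glue_homeo {E : Type*} [TopologicalSpace E] [T2Space E] (p : E) (U : ℕ → Set E)
    (hU : ∀ k, IsOpen (U k)) (hd : ∀ i j x, x ∈ U i → x ∈ U j → i = j)
    (hp : ∀ W ∈ 𝓝 p, ∃ K, ∀ k ≥ K, U k ⊆ W)
    (g : ℕ → E ≃ₜ E) (hg : ∀ k z, z ∉ U k → g k z = z) :
    ∃ H : E ≃ₜ E, (∀ k, ∀ x ∈ U k, H x = g k x) ∧ ∀ x, (∀ k, x ∉ U k) → H x = x := by
  have hg' : ∀ k z, z ∉ U k → (g k).symm z = z := fun k z hz => by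
    rw [Homeomorph.symm_apply_eq, hg k z hz]
  have inv : ∀ (a b : ℕ → E ≃ₜ E), (∀ k z, z ∉ U k → a k z = z) → (∀ k x, b k (a k x) = x) →
      ∀ x, glueFun U (fun k => b k) (glueFun U (fun k => a k) x) = x := by
    intro a b ha hab x
    by_cases hx : ∃ k, x ∈ U k
    · obtain ⟨k, hk⟩ := hx
      rw [glue_mem hd hk, glue_mem hd (homeo_maps (ha k) hk), hab]
    · push Not at hx
      rw [glue_not hx, glue_not hx]
  refine ⟨⟨⟨glueFun U (fun k => g k), glueFun U (fun k => (g k).symm), ?_, ?_⟩, ?_, ?_⟩, ?_, ?_⟩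
  · exact inv g (fun k => (g k).symm) hg (by simp)
  · exact inv (fun k => (g k).symm) g hg' (by simp)
  · exact glue_cont p U hU hd hp g hg
  · exact glue_cont p U hU hd hp (fun k => (g k).symm) hg'
  · intro k x hx
    exact glue_mem (g := fun k => ⇑(g k)) hd hx
  · intro x hx
    exact glue_not (g := fun k => ⇑(g k)) hx

/-- extension by the identity through a chart -/
noncomputable def extFun {M E : Type*} [TopologicalSpace M] [TopologicalSpace E]
    (e : OpenPartialHomeomorph M E) (g : E → E) (x : M) : M :=
  open Classical in if x ∈ e.source then e.symm (g (e x)) else x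

theorem ext_cont {M E : Type*} [TopologicalSpace M] [TopologicalSpace E] [T2Space M]
    (e : OpenPartialHomeomorph M E) (C : Set E) (hC : IsCompact C) (hCt : C ⊆ e.target)
    (g : E ≃ₜ E) (hg : ∀ z, z ∉ C → g z = z) : Continuous (extFun e g) := by
  have hK : IsClosed (e.symm '' C) :=
    (hC.image_of_continuousOn (e.symm.continuousOn.mono hCt)).isClosed
  rw [continuous_iff_continuousAt]
  intro x
  by_cases hx : x ∈ e.source
  · have hm : g (e x) ∈ e.target := by
      by_cases h : e x ∈ C
      · exact hCt (homeo_maps hg h)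
      · rw [hg _ h]; exact e.map_source hx
    have : ContinuousAt (fun y => e.symm (g (e y))) x :=
      ContinuousAt.comp (f := fun y => g (e y)) (g := e.symm) (e.symm.continuousAt hm)
        (g.continuous.continuousAt.comp (e.continuousAt hx))
    refine this.congr ?_
    filter_upwards [e.open_source.mem_nhds hx] with y hy
    simp [extFun, hy]
  · refine continuousAt_id.congr ?_
    have hxK : x ∈ (e.symm '' C)ᶜ := by
      rintro ⟨c, hc, rfl⟩
      exact hx (e.map_target (hCt hc))
    filter_upwards [hK.isOpen_compl.mem_nhds hxK] with y hy
    by_cases hy' : y ∈ e.source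
    · have : e y ∉ C := fun h => hy ⟨e y, h, e.left_inv hy'⟩
      simp [extFun, hy', hg _ this]
    · simp [extFun, hy']

theorem ext_homeo {M E : Type*} [TopologicalSpace M] [TopologicalSpace E] [T2Space M]
    (e : OpenPartialHomeomorph M E) (C : Set E) (hC : IsCompact C) (hCt : C ⊆ e.target)
    (g : E ≃ₜ E) (hg : ∀ z, z ∉ C → g z = z) :
    ∃ H : M ≃ₜ M, ∀ x ∈ e.source, H x = e.symm (g (e x)) := by
  have hg' : ∀ z, z ∉ C → g.symm z = z := fun z hz => by
    rw [Homeomorph.symm_apply_eq, hg z hz]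
  have inv : ∀ (a b : E ≃ₜ E), (∀ z, z ∉ C → a z = z) → (∀ x, b (a x) = x) →
      ∀ x, extFun e b (extFun e a x) = x := by
    intro a b ha hab x
    by_cases hx : x ∈ e.source
    · have hm : a (e x) ∈ e.target := by
        by_cases h : e x ∈ C
        · exact hCt (homeo_maps ha h)
        · rw [ha _ h]; exact e.map_source hx
      simp [extFun, hx, e.map_target hm, e.right_inv hm, hab]
    · simp [extFun, hx]
  refine ⟨⟨⟨extFun e g, extFun e g.symm, ?_, ?_⟩, ?_, ?_⟩, ?_⟩
  · exact inv g g.symm hg (by simp)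
  · exact inv g.symm g hg' (by simp)
  · exact ext_cont e C hC hCt g hg
  · exact ext_cont e C hC hCt g.symm hg'
  · intro x hx
    change extFun e g x = _
    simp [extFun, hx]

theorem charted_nhds_cg {H M : Type*} [TopologicalSpace H] [FirstCountableTopology H]
    [TopologicalSpace M] [ChartedSpace H M] (x : M) : (𝓝 x).IsCountablyGenerated := by
  have := (chartAt H x).symm_map_nhds_eq (mem_chart_source H x)
  rw [← this]
  infer_instance

/-- If `n ≥ 2` and `q : (V,Σ) → (M,{p})` is a topological blowup with
`V \ Σ` dense in `V`, and every homeomorphism of `(M,{p})` is covered through `q` by a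
homeomorphism of `(V,Σ)`, then `Σ` is a single point and `q` is a homeomorphism. -/
theorem lifting_forces_trivial_blowup (n : ℕ) (hn : 2 ≤ n)
    (V M : Type*) [TopologicalSpace V] [TopologicalSpace M]
    [T2Space V] [T2Space M]
    [ChartedSpace (EuclideanSpace ℝ (Fin n)) V]
    [ChartedSpace (EuclideanSpace ℝ (Fin n)) M] (p : M)
    (B : TopBlowup n V M p)
    (hdense : Dense ((B.q ⁻¹' {p})ᶜ))
    (hlift : ∀ h : M ≃ₜ M, h p = p →
      ∃ hLift : V ≃ₜ V, hLift '' (B.q ⁻¹' {p}) = B.q ⁻¹' {p} ∧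
        B.q ∘ ⇑hLift = ⇑h ∘ B.q) :
    (∃ v : V, B.q ⁻¹' {p} = {v}) ∧ IsHomeomorph B.q := by
  classical
  set E := EuclideanSpace ℝ (Fin n) with hE
  set S := B.q ⁻¹' {p} with hS
  have hqc : Continuous B.q := B.quotientMap.continuous
  have hinj : ∀ v w, v ∉ S → B.q v = B.q w → v = w := by
    intro v w hv hvw
    have hw : w ∉ S := by
      intro h
      apply hv
      rw [hS, mem_preimage, hvw]; exact h
    have := B.homeo_off.injective (a₁ := ⟨v, hv⟩) (a₂ := ⟨w, hw⟩) (Subtype.ext hvw)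
    exact congrArg Subtype.val this
  obtain ⟨a, ha⟩ := B.connected_fiber.nonempty
  have hsub : ∀ b ∈ S, b = a := by
    intro b hb
    by_contra hne
    set e := chartAt E p with he
    -- translate so that p goes to the origin
    set f : OpenPartialHomeomorph M E :=
      e.trans (Homeomorph.addRight (-(e p))).toOpenPartialHomeomorph with hf
    have hps : p ∈ f.source := by simp [hf, he]
    have hfp : f p = 0 := by simp [hf]
    have h0t : (0 : E) ∈ f.target := hfp ▸ f.map_source hps
    obtain ⟨r0, hr0, hr0t⟩ := Metric.nhds_basis_closedBall.mem_iff.1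
      (f.open_target.mem_nhds h0t)
    have := charted_nhds_cg (H := E) a
    have := charted_nhds_cg (H := E) b
    obtain ⟨A, hA⟩ := (𝓝 a).exists_antitone_basis
    obtain ⟨D, hD⟩ := (𝓝 b).exists_antitone_basis
    have pick : ∀ (c : V), c ∈ S → ∀ N ∈ 𝓝 c, ∀ r : ℝ, 0 < r →
        ∃ v ∈ N, v ∉ S ∧ B.q v ∈ f.source ∧ 0 < ‖f (B.q v)‖ ∧ ‖f (B.q v)‖ < r := by
      intro c hc N hN r hr
      have hc' : B.q c = p := hc
      have h1 : ∀ᶠ v in 𝓝 c, B.q v ∈ f.source :=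
        hqc.continuousAt (f.open_source.mem_nhds (by rw [hc']; exact hps))
      have h2 : ∀ᶠ v in 𝓝 c, ‖f (B.q v)‖ < r := by
        have hcont : ContinuousAt (fun v => ‖f (B.q v)‖) c := by
          refine continuous_norm.continuousAt.comp ?_
          refine ContinuousAt.comp (f := B.q) (g := f) ?_ hqc.continuousAt
          rw [hc']; exact f.continuousAt hps
        apply hcont.eventually_lt continuousAt_const
        simp [hc', hfp, hr]
      obtain ⟨v, ⟨hvN, hv1, hv2⟩, hv⟩ := mem_closure_iff_nhds.1 (hdense c) _
        (Filter.inter_mem hN (h1.and h2))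
      refine ⟨v, hvN, hv, hv1, ?_, hv2⟩
      rw [norm_pos_iff]
      intro h
      apply hv
      exact f.injOn hv1 hps (h.trans hfp.symm)
    have step : ∀ (k : ℕ) (r : ℝ), ∃ (v w : V) (r' : ℝ), 0 < r →
        v ∈ A k ∧ w ∈ D k ∧ v ∉ S ∧ w ∉ S ∧ B.q v ∈ f.source ∧ B.q w ∈ f.source ∧
        f (B.q v) ∈ annu E r' r ∧ f (B.q w) ∈ annu E r' r ∧ 0 < r' ∧ r' ≤ r / 2 := by
      intro k r
      by_cases hr : 0 < r
      · obtain ⟨v, v1, v2, v3, v4, v5⟩ := pick a ha (A k) (hA.1.mem_of_mem trivial) r hr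
        obtain ⟨w, w1, w2, w3, w4, w5⟩ := pick b hb (D k) (hD.1.mem_of_mem trivial) r hr
        obtain ⟨t, ht0, ht⟩ := exists_between (lt_min (lt_min v4 w4) (half_pos hr))
        rw [lt_min_iff, lt_min_iff] at ht
        exact ⟨v, w, t, fun _ => ⟨v1, w1, v2, w2, v3, w3, ⟨ht.1.1, v5⟩, ⟨ht.1.2, w5⟩, ht0,
          ht.2.le⟩⟩
      · exact ⟨a, a, 0, fun h => absurd h hr⟩
    choose v w r' hstep using step
    let R : ℕ → ℝ := fun k => Nat.rec r0 (fun k r => r' k r) k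
    have hR0 : R 0 = r0 := rfl
    have hRs : ∀ k, R (k + 1) = r' k (R k) := fun k => rfl
    have hRpos : ∀ k, 0 < R k := by
      intro k
      induction k with
      | zero => exact hr0
      | succ k ih => rw [hRs]; exact (hstep k (R k) ih).2.2.2.2.2.2.2.2.1
    have hRhalf : ∀ k, R (k + 1) ≤ R k / 2 := fun k => by
      rw [hRs]; exact (hstep k (R k) (hRpos k)).2.2.2.2.2.2.2.2.2
    have hRanti : Antitone R := antitone_nat_of_succ_le fun k => by
      linarith [hRhalf k, hRpos k]
    have hRle : ∀ k, R k ≤ r0 * (1 / 2) ^ k := by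
      intro k
      induction k with
      | zero => simp [hR0]
      | succ k ih => rw [pow_succ]; linarith [hRhalf k]
    have hRlim : Tendsto R atTop (𝓝 0) := by
      refine squeeze_zero (fun k => (hRpos k).le) hRle ?_
      simpa using (tendsto_pow_atTop_nhds_zero_of_lt_one (r := (1 / 2 : ℝ)) (by norm_num)
        (by norm_num)).const_mul r0
    let U : ℕ → Set E := fun k => annu E (R (k + 1)) (R k)
    have hU : ∀ k, IsOpen (U k) := fun k => annu_open E _ _
    have hd : ∀ i j x, x ∈ U i → x ∈ U j → i = j := by
      have : ∀ i j x, x ∈ U i → x ∈ U j → ¬ i < j := by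
        intro i j x hi hj hij
        have h1 : R j ≤ R (i + 1) := hRanti hij
        have h2 := hi.1
        have h3 := hj.2
        linarith
      intro i j x hi hj
      exact le_antisymm (not_lt.1 (this j i x hj hi)) (not_lt.1 (this i j x hi hj))
    have hp : ∀ W ∈ 𝓝 (0 : E), ∃ K, ∀ k ≥ K, U k ⊆ W := by
      intro W hW
      obtain ⟨ε, hε, hεW⟩ := Metric.mem_nhds_iff.1 hW
      obtain ⟨K, hK⟩ := (hRlim.eventually_lt_const hε).exists_forall_of_atTop
      refine ⟨K, fun k hk x hx => hεW ?_⟩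
      rw [mem_ball_zero_iff]
      exact hx.2.trans (hK k hk)
    let V' : ℕ → V := fun k => v k (R k)
    let W' : ℕ → V := fun k => w k (R k)
    have hst := fun k => hstep k (R k) (hRpos k)
    have hgk : ∀ k, ∃ g : E ≃ₜ E, g (f (B.q (V' k))) =
        f (B.q (if Even k then V' k else W' k)) ∧ ∀ z, z ∉ U k → g z = z := by
      intro k
      obtain ⟨-, -, -, -, -, -, h1, h2, -, -⟩ := hst k
      refine aux_trans (U k) (hU k) (annu_conn n hn _ _ (hRpos (k + 1))) _ _ h1 ?_
      split_ifs
      · exact h1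
      · exact h2
    choose g hg1 hg2 using hgk
    obtain ⟨G, hG1, hG2⟩ := glue_homeo (0 : E) U hU hd hp g hg2
    have hGC : ∀ z, z ∉ Metric.closedBall (0 : E) r0 → G z = z := by
      intro z hz
      apply hG2
      intro k hk
      apply hz
      rw [mem_closedBall_zero_iff]
      exact hk.2.le.trans (hRanti (Nat.zero_le k))
    obtain ⟨H, hH⟩ := ext_homeo f _ (isCompact_closedBall (0 : E) r0) hr0t G hGC
    have hHp : H p = p := by
      rw [hH p hps, hfp, hG2, ← hfp, f.left_inv hps]
      intro k hk
      have := hk.1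
      rw [norm_zero] at this
      linarith [hRpos (k + 1)]
    obtain ⟨L, -, hL⟩ := hlift H hHp
    have hLk : ∀ k, L (V' k) = if Even k then V' k else W' k := by
      intro k
      obtain ⟨-, -, h1, h2, h3, h4, h5, -, -, -⟩ := hst k
      symm
      apply hinj
      · split_ifs
        · exact h1
        · exact h2
      · have := congrFun hL (V' k)
        simp only [Function.comp_apply] at this
        rw [this, hH _ h3, hG1 k _ h5, hg1 k, f.left_inv]
        split_ifs
        · exact h3
        · exact h4
    have hVa : Tendsto V' atTop (𝓝 a) := hA.tendsto fun k => (hst k).1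
    have hWb : Tendsto W' atTop (𝓝 b) := hD.tendsto fun k => (hst k).2.1
    have hLV : Tendsto (fun k => L (V' k)) atTop (𝓝 (L a)) :=
      (L.continuous.tendsto a).comp hVa
    have t1 : Tendsto (fun k : ℕ => 2 * k) atTop atTop :=
      tendsto_atTop_mono (fun k => by simp only [id]; omega) tendsto_id
    have t2 : Tendsto (fun k : ℕ => 2 * k + 1) atTop atTop :=
      tendsto_atTop_mono (fun k => by simp only [id]; omega) tendsto_id
    have e1 : L a = a := by
      refine tendsto_nhds_unique (hLV.comp t1) ((hVa.comp t1).congr fun k => ?_)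
      simp [hLk]
    have e2 : L a = b := by
      refine tendsto_nhds_unique (hLV.comp t2) ((hWb.comp t2).congr fun k => ?_)
      simp [hLk]
    exact hne (e2.symm.trans e1)
  refine ⟨⟨a, ?_⟩, ?_⟩
  · ext x
    exact ⟨fun hx => hsub x hx, fun hx => by rw [mem_singleton_iff.1 hx]; exact ha⟩
  · have hI : Function.Injective B.q := by
      intro x y hxy
      by_cases hx : x ∈ S
      · have hy : y ∈ S := by
          have : B.q x = p := hx
          exact hxy.symm.trans this
        rw [hsub x hx, hsub y hy]
      · exact hinj x y hx hxy
    refine ⟨hqc, fun O hO => ?_, hI, B.quotientMap.surjective⟩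
    rw [← B.quotientMap.isOpen_preimage, preimage_image_eq _ hI]
    exact hO
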